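/- Let ι and κ be finite types, S : Matrix (ι × κ) (ι × κ) ℂ, R⁻ : Matrix (κ × κ) (κ × κ) ℂ, and let F be the flip matrix on index type κ × κ. Consider placements on the triple index type ι × κ × κ: S₁₂ and S₁₃ act on positions (1,2) and (1,3), and R⁻₂₃ and F₂₃ act on positions (2,3). If the right mixed Yang–Baxter equation S₁₂ * S₁₃ * R⁻₂₃ = R⁻₂₃ * S₁₃ * S₁₂ holds, then (F*R⁻)₂₃ commutes with S₁₃ * S₁₂, i.e., (F*R⁻)₂₃ * (S₁₃ * S₁₂) = (S₁₃ * S₁₂) * (F*R⁻)₂₃. -/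

import Mathlib

/-!
The flip on the last two tensor legs intertwines the placements: `F₂₃ S₁₂ = S₁₃ F₂₃` and
`F₂₃ S₁₃ = S₁₂ F₂₃`. Since `A ↦ A₂₃` is multiplicative, the Yang–Baxter equation gives
`(F R)₂₃ S₁₃ S₁₂ = F₂₃ S₁₂ S₁₃ R₂₃ = S₁₃ S₁₂ F₂₃ R₂₃ = S₁₃ S₁₂ (F R)₂₃`.
-/

open Matrix

noncomputable section

/-- The flip matrix on index type `κ × κ`. -/
def flipM (κ : Type*) [DecidableEq κ] : Matrix (κ × κ) (κ × κ) ℂ :=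
  fun p q => if p.1 = q.2 ∧ p.2 = q.1 then 1 else 0

/-- Placement of `B : Matrix (ι × κ) (ι × κ) ℂ` on positions (1,2) of `ι × κ × κ`. -/
def pl12 {ι κ : Type*} [DecidableEq κ] (B : Matrix (ι × κ) (ι × κ) ℂ) :
    Matrix (ι × κ × κ) (ι × κ × κ) ℂ :=
  fun x y => if x.2.2 = y.2.2 then B (x.1, x.2.1) (y.1, y.2.1) else 0

/-- Placement of `B : Matrix (ι × κ) (ι × κ) ℂ` on positions (1,3) of `ι × κ × κ`. -/
def pl13 {ι κ : Type*} [DecidableEq κ] (B : Matrix (ι × κ) (ι × κ) ℂ) :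
    Matrix (ι × κ × κ) (ι × κ × κ) ℂ :=
  fun x y => if x.2.1 = y.2.1 then B (x.1, x.2.2) (y.1, y.2.2) else 0

/-- Placement of `A : Matrix (κ × κ) (κ × κ) ℂ` on positions (2,3) of `ι × κ × κ`. -/
def pl23 {ι κ : Type*} [DecidableEq ι] (A : Matrix (κ × κ) (κ × κ) ℂ) :
    Matrix (ι × κ × κ) (ι × κ × κ) ℂ :=
  fun x y => if x.1 = y.1 then A (x.2.1, x.2.2) (y.2.1, y.2.2) else 0

lemma pl23_mul {ι κ : Type*} [Fintype ι] [DecidableEq ι] [Fintype κ]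
    (A B : Matrix (κ × κ) (κ × κ) ℂ) :
    pl23 (ι := ι) (A * B) = pl23 A * pl23 B := by
  ext ⟨x, p⟩ ⟨y, q⟩
  by_cases h : x = y <;>
    simp [pl23, Matrix.mul_apply, Fintype.sum_prod_type, h, Finset.sum_ite_irrel]

/-- Left multiplication by `F₂₃` swaps the last two components of the row index. -/
lemma pl23_flipM_mul_apply {ι κ : Type*} [Fintype ι] [DecidableEq ι] [Fintype κ]
    [DecidableEq κ] (M : Matrix (ι × κ × κ) (ι × κ × κ) ℂ) (a : ι) (b c : κ)
    (y : ι × κ × κ) :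
    (pl23 (flipM κ) * M : Matrix (ι × κ × κ) (ι × κ × κ) ℂ) (a, b, c) y = M (a, c, b) y := by
  rw [Matrix.mul_apply, Finset.sum_eq_single (a, c, b)]
  · simp [pl23, flipM]
  · rintro ⟨a', b', c'⟩ - h
    have : ¬ (a = a' ∧ b = c' ∧ c = b') := by
      rintro ⟨rfl, rfl, rfl⟩
      exact h rfl
    simp only [pl23, flipM]
    grind
  · simp

/-- Right multiplication by `F₂₃` swaps the last two components of the column index. -/
lemma mul_pl23_flipM_apply {ι κ : Type*} [Fintype ι] [DecidableEq ι] [Fintype κ]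
    [DecidableEq κ] (M : Matrix (ι × κ × κ) (ι × κ × κ) ℂ) (x : ι × κ × κ) (a : ι)
    (b c : κ) :
    (M * pl23 (flipM κ) : Matrix (ι × κ × κ) (ι × κ × κ) ℂ) x (a, b, c) = M x (a, c, b) := by
  rw [Matrix.mul_apply, Finset.sum_eq_single (a, c, b)]
  · simp [pl23, flipM]
  · rintro ⟨a', b', c'⟩ - h
    have : ¬ (a' = a ∧ b' = c ∧ c' = b) := by
      rintro ⟨rfl, rfl, rfl⟩
      exact h rfl
    simp only [pl23, flipM]
    grind
  · simp

lemma pl23_flipM_mul_pl12 {ι κ : Type*} [Fintype ι] [DecidableEq ι] [Fintype κ]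
    [DecidableEq κ] (S : Matrix (ι × κ) (ι × κ) ℂ) :
    pl23 (flipM κ) * pl12 S = pl13 S * pl23 (flipM κ) := by
  ext ⟨a, b, c⟩ ⟨a', b', c'⟩
  rw [pl23_flipM_mul_apply, mul_pl23_flipM_apply]
  rfl

lemma pl23_flipM_mul_pl13 {ι κ : Type*} [Fintype ι] [DecidableEq ι] [Fintype κ]
    [DecidableEq κ] (S : Matrix (ι × κ) (ι × κ) ℂ) :
    pl23 (flipM κ) * pl13 S = pl12 S * pl23 (flipM κ) := by
  ext ⟨a, b, c⟩ ⟨a', b', c'⟩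
  rw [pl23_flipM_mul_apply, mul_pl23_flipM_apply]
  rfl

theorem stmt14 (ι κ : Type*) [Fintype ι] [DecidableEq ι] [Fintype κ] [DecidableEq κ]
    (S : Matrix (ι × κ) (ι × κ) ℂ) (Rm : Matrix (κ × κ) (κ × κ) ℂ)
    (hYBE : pl12 S * pl13 S * pl23 (ι := ι) (κ := κ) Rm =
      pl23 (ι := ι) (κ := κ) Rm * pl13 S * pl12 S) :
    pl23 (ι := ι) (κ := κ) (flipM κ * Rm) * (pl13 S * pl12 S) =
      (pl13 S * pl12 S) * pl23 (ι := ι) (κ := κ) (flipM κ * Rm) := by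
  calc pl23 (flipM κ * Rm) * (pl13 S * pl12 S)
      = pl23 (flipM κ) * (pl23 Rm * pl13 S * pl12 S) := by
        simp only [pl23_mul, Matrix.mul_assoc]
    _ = pl23 (flipM κ) * pl12 S * pl13 S * pl23 Rm := by
        rw [← hYBE]
        simp only [Matrix.mul_assoc]
    _ = pl13 S * (pl23 (flipM κ) * pl13 S) * pl23 Rm := by
        rw [pl23_flipM_mul_pl12, Matrix.mul_assoc (pl13 S)]
    _ = pl13 S * pl12 S * pl23 (flipM κ * Rm) := by
        rw [pl23_flipM_mul_pl13, pl23_mul]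
        simp only [Matrix.mul_assoc]
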